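/- arXiv:2212.04186 — 3 statements merged into one kernel-verified Lean document; each statement's English description precedes it below -/
import Mathlib

section
/- Let T, L, ℓ be positive integers and let x ∈ {0,1}^{T×n} satisfy the min-up/min-down constraints with minimum uptime L and minimum downtime ℓ for units j and j'. Let t ∈ {ℓ+1, …, T} be such that x_{t',j} = x_{t',j'} = 0 for all t' ∈ {t−ℓ, …, t−1}. Define x' by swapping columns j and j' on rows t, …, T (i.e., x'_{s,j} = x_{s,j'} and x'_{s,j'} = x_{s,j} for s ≥ t, all other entries unchanged). Then x' also satisfies the min-up/min-down constraints with parameters L and ℓ for units j and j', and x'_{t',j} = x'_{t',j'} = 0 for all t' ∈ {t−ℓ, …, t−1}. -/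
/-!
Each of the two new schedules is a splice: one feasible schedule before time `t`, another one from
`t` onward, both being down on the window `{t - ℓ, …, t - 1}`. A constraint triggered before `t`
never reaches past the splice point: a start-up run must be over by `t - 1`, where the unit is
down, and a shut-down happens no later than `t - ℓ`, so its forced downtime ends by `t - 1`.
A constraint triggered at `t` or later is one of the second schedule, because both schedules agree
(are down) at `t - 1`. This is `MinUpDown.splice`, applied once per unit.
-/

/-- The min-up/min-down constraints with minimum uptime `L` and minimum
downtime `ℓ` on the time horizon `{1, …, T}` for a single unit whose schedule
is `x : ℕ → ℤ` (`x t = 1` iff the unit is up at time `t`):  after a start-up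
at time `t` the unit stays up until `min (t + L - 1) T`, and after a
shut-down at time `t` it stays down until `min (t + ℓ - 1) T`. -/
def MinUpDown (T L ℓ : ℕ) (x : ℕ → ℤ) : Prop :=
  (∀ t : ℕ, 2 ≤ t → t ≤ T → x (t - 1) = 0 → x t = 1 →
    ∀ t' : ℕ, t ≤ t' → t' ≤ min (t + L - 1) T → x t' = 1) ∧
  (∀ t : ℕ, 2 ≤ t → t ≤ T → x (t - 1) = 1 → x t = 0 →
    ∀ t' : ℕ, t ≤ t' → t' ≤ min (t + ℓ - 1) T → x t' = 0)

/-- Following a feasible schedule `a` before time `t` and a feasible schedule `b` from `t` onward is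
feasible, provided both are down on the `ℓ` time steps preceding `t`. -/
theorem MinUpDown.splice {T L ℓ t : ℕ} {a b : ℕ → ℤ} (ha : MinUpDown T L ℓ a)
    (hb : MinUpDown T L ℓ b) (hℓ : 0 < ℓ) (ht : ℓ + 1 ≤ t) (htT : t ≤ T)
    (hda : ∀ s, t - ℓ ≤ s → s ≤ t - 1 → a s = 0)
    (hdb : ∀ s, t - ℓ ≤ s → s ≤ t - 1 → b s = 0) :
    MinUpDown T L ℓ (fun s => if t ≤ s then b s else a s) := by
  have ha0 : a (t - 1) = 0 := hda _ (by omega) le_rfl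
  have hb0 : b (t - 1) = 0 := hdb _ (by omega) le_rfl
  constructor
  · intro s hs2 hsT h0 h1 s' hss' hs'
    dsimp only at h0 h1 ⊢
    by_cases hst : t ≤ s
    · rw [if_pos hst] at h1
      rw [if_pos (hst.trans hss')]
      refine hb.1 s hs2 hsT ?_ h1 s' hss' hs'
      rcases hst.eq_or_lt with rfl | hlt
      · exact hb0
      · rwa [if_pos (by omega)] at h0
    · rw [if_neg (by omega)] at h0 h1
      have hup := ha.1 s hs2 hsT h0 h1
      by_cases hts' : t ≤ s'
      · -- The run started at `s` would contain `t - 1`, where `a` is down.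
        have := hup (t - 1) (by omega) (by omega)
        omega
      · rw [if_neg hts']
        exact hup s' hss' hs'
  · intro s hs2 hsT h1 h0 s' hss' hs'
    dsimp only at h0 h1 ⊢
    by_cases hst : t ≤ s
    · rw [if_pos hst] at h0
      rw [if_pos (hst.trans hss')]
      refine hb.2 s hs2 hsT ?_ h0 s' hss' hs'
      rcases hst.eq_or_lt with rfl | hlt
      · rw [if_neg (by omega)] at h1
        omega
      · rwa [if_pos (by omega)] at h1
    · rw [if_neg (by omega)] at h0 h1
      -- The unit is up at `s - 1`, so the shut-down happens no later than the window's first step.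
      have hw : s - 1 < t - ℓ := by
        by_contra hc
        have := hda (s - 1) (by omega) (by omega)
        omega
      rw [if_neg (by omega)]
      exact ha.2 s hs2 hsT h1 h0 s' hss' hs'

/-- the start-up sub-symmetry of the MUCP.  If units `j` and
`j'` are both ready to start up at time `t` (both down throughout
`{t - ℓ, …, t - 1}`), then swapping their schedules from time `t` onward
preserves the min-up/min-down constraints for both units, and both units
remain down throughout `{t - ℓ, …, t - 1}`. -/
theorem mucp_startup_subsymmetry (T L ℓ n : ℕ) (hT : 0 < T) (hL : 0 < L)
    (hℓ : 0 < ℓ) (x : ℕ → ℕ → ℤ) (hbin : ∀ t u, x t u = 0 ∨ x t u = 1)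
    (j j' : ℕ) (hj : 1 ≤ j ∧ j ≤ n) (hj' : 1 ≤ j' ∧ j' ≤ n)
    (hxj : MinUpDown T L ℓ (fun t => x t j))
    (hxj' : MinUpDown T L ℓ (fun t => x t j'))
    (t : ℕ) (ht1 : ℓ + 1 ≤ t) (ht2 : t ≤ T)
    (hdown : ∀ t' : ℕ, t - ℓ ≤ t' → t' ≤ t - 1 → x t' j = 0 ∧ x t' j' = 0) :
    let x' : ℕ → ℕ → ℤ := fun s u =>
      if t ≤ s then (if u = j then x s j' else if u = j' then x s j else x s u)
      else x s u
    MinUpDown T L ℓ (fun s => x' s j) ∧ MinUpDown T L ℓ (fun s => x' s j') ∧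
    ∀ t' : ℕ, t - ℓ ≤ t' → t' ≤ t - 1 → x' t' j = 0 ∧ x' t' j' = 0 := by
  intro x'
  have hdj := fun s h1 h2 => (hdown s h1 h2).1
  have hdj' := fun s h1 h2 => (hdown s h1 h2).2
  refine ⟨?_, ?_, ?_⟩
  · convert hxj.splice hxj' hℓ ht1 ht2 hdj hdj' using 2 with s
    simp [x']
  · convert hxj'.splice hxj hℓ ht1 ht2 hdj' hdj using 2 with s
    by_cases h : j' = j <;> simp [x', h]
  · intro s h1 h2
    have hs : ¬ t ≤ s := by omega
    simpa [x', hs] using hdown s h1 h2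
end

section
/- Let G = (V,E) be a finite simple graph, k a positive integer, and x ∈ {0,1}^{V×[k]} a feasible solution of the MKCS IP (x_{i,r} + x_{j,r} ≤ 1 for every edge {i,j} and every r ∈ [k], and Σ_r x_{i,r} ≤ 1 for every i ∈ V). Let c_1 ≠ c_2 be two colors in [k], and let R ⊆ V be such that every vertex v ∉ R that is adjacent to some vertex of R satisfies x_{v,c_1} = x_{v,c_2} = 0. Define x' by x'_{i,c_1} = x_{i,c_2} and x'_{i,c_2} = x_{i,c_1} for all i ∈ R, with all other entries unchanged. Then x' is feasible for the MKCS IP and has the same objective value Σ_{i,r} x'_{i,r} = Σ_{i,r} x_{i,r}. -/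
/-! On `R` the new solution is `x` composed with the transposition of `c₁` and `c₂`, so each row
of `x'` is a permutation of the same row of `x`: row sums, hence the packing constraints at the
vertices and the objective, are unchanged. An edge inside or outside `R` inherits its constraint
from `x` (at the swapped or at the same color). On an edge leaving `R`, the constraint can only
change at the colors `c₁`, `c₂`, where the endpoint outside `R` contributes `0` and the other one
at most `1`. -/

/-- color sub-symmetry of the max-k-colorable subgraph IP.  If
no vertex outside `R` that is adjacent to a vertex of `R` uses the colors
`c₁` or `c₂`, then swapping the colors `c₁` and `c₂` on the vertices of `R`
preserves feasibility and the objective value. -/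
theorem mkcs_color_subsymmetry {V : Type*} [Fintype V] [DecidableEq V]
    (G : SimpleGraph V) (k : ℕ) (hk : 0 < k)
    (x : V → Fin k → ℤ) (hbin : ∀ i r, x i r = 0 ∨ x i r = 1)
    (hedge : ∀ i j, G.Adj i j → ∀ r : Fin k, x i r + x j r ≤ 1)
    (hvert : ∀ i, ∑ r, x i r ≤ 1)
    (c₁ c₂ : Fin k) (hcc : c₁ ≠ c₂) (R : Finset V)
    (hN : ∀ v ∉ R, (∃ u ∈ R, G.Adj v u) → x v c₁ = 0 ∧ x v c₂ = 0) :
    let x' : V → Fin k → ℤ := fun i r =>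
      if i ∈ R then (if r = c₁ then x i c₂ else if r = c₂ then x i c₁ else x i r)
      else x i r
    (∀ i j, G.Adj i j → ∀ r : Fin k, x' i r + x' j r ≤ 1) ∧
    (∀ i, ∑ r, x' i r ≤ 1) ∧
    (∑ i, ∑ r, x' i r) = ∑ i, ∑ r, x i r := by
  intro x'
  have hx' : ∀ i r, x' i r = if i ∈ R then x i (Equiv.swap c₁ c₂ r) else x i r := by
    intro i r
    simp only [x', Equiv.swap_apply_def]
    split_ifs <;> rfl
  have hsum : ∀ i, ∑ r, x' i r = ∑ r, x i r := by
    intro i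
    simp only [hx']
    split_ifs
    · exact Equiv.sum_comp (Equiv.swap c₁ c₂) (x i)
    · rfl
  have hle : ∀ i r, x i r ≤ 1 := fun i r => by
    rcases hbin i r with h | h <;> omega
  have hcross : ∀ i j, G.Adj i j → i ∈ R → j ∉ R → ∀ r,
      x i (Equiv.swap c₁ c₂ r) + x j r ≤ 1 := by
    intro i j hij hi hj r
    obtain ⟨h₁, h₂⟩ := hN j hj ⟨i, hi, hij.symm⟩
    by_cases hr₁ : r = c₁
    · subst hr₁
      simpa [h₁] using hle i c₂
    by_cases hr₂ : r = c₂
    · subst hr₂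
      simpa [h₂] using hle i c₁
    rw [Equiv.swap_apply_of_ne_of_ne hr₁ hr₂]
    exact hedge i j hij r
  refine ⟨fun i j hij r => ?_, fun i => (hsum i).trans_le (hvert i),
    Finset.sum_congr rfl fun i _ => hsum i⟩
  rw [hx', hx']
  split_ifs with hi hj hj
  · exact hedge i j hij _
  · exact hcross i j hij hi hj r
  · rw [add_comm]
    exact hcross j i hij.symm hj hi r
  · exact hedge i j hij r
end

section
/- Let G = (V,E) be a finite simple graph, k a positive integer, and x ∈ {0,1}^{V×[k]} a feasible solution of the MKCS IP (x_{i,r} + x_{j,r} ≤ 1 for every edge {i,j} and every r ∈ [k], and Σ_r x_{i,r} ≤ 1 for every i ∈ V). Let c_1 ≠ c_2 be colors in [k], let S ⊆ V satisfy x_{v,c_1} = x_{v,c_2} = 0 for all v ∈ S, and let C be the vertex set of a connected component of the subgraph induced by V ∖ S. Define x' by swapping the entries in columns c_1 and c_2 on the rows in C (x'_{i,c_1} = x_{i,c_2} and x'_{i,c_2} = x_{i,c_1} for i ∈ C, all other entries unchanged). Then x' is feasible for the MKCS IP and Σ_{i,r} x'_{i,r} = Σ_{i,r} x_{i,r}.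 -/
/-!
On a row of `C` the new point is the old one read through the transposition `(c₁ c₂)`; every other
row is untouched. Row sums are invariant under permuting the colors, which gives the vertex
constraints and the objective value. An edge with both ends in `C`, or both outside it, inherits
its constraint from the old point. An edge leaving the component `C` must end in `S`, where the
entries in columns `c₁` and `c₂` vanish, so its constraint survives the swap at the other end.
-/

open scoped Classical

/-- activation handler for the max-k-colorable subgraph
problem.  If every vertex of `S` is fixed to use neither color `c₁` nor `c₂`,
and `C` is the vertex set of a connected component of the subgraph induced by
`V ∖ S`, then swapping the colors `c₁` and `c₂` on the vertices of `C`
preserves feasibility and the objective value. -/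
theorem mkcs_activation_handler {V : Type*} [Fintype V] (G : SimpleGraph V)
    (k : ℕ) (hk : 0 < k)
    (x : V → Fin k → ℤ) (hbin : ∀ i r, x i r = 0 ∨ x i r = 1)
    (hedge : ∀ i j, G.Adj i j → ∀ r : Fin k, x i r + x j r ≤ 1)
    (hvert : ∀ i, ∑ r, x i r ≤ 1)
    (c₁ c₂ : Fin k) (hcc : c₁ ≠ c₂) (S : Set V)
    (hS : ∀ v ∈ S, x v c₁ = 0 ∧ x v c₂ = 0)
    (comp : (G.induce Sᶜ).ConnectedComponent) :
    let C : Set V :=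
      {v | ∃ hv : v ∈ Sᶜ, (G.induce Sᶜ).connectedComponentMk ⟨v, hv⟩ = comp}
    let x' : V → Fin k → ℤ := fun i r =>
      if i ∈ C then (if r = c₁ then x i c₂ else if r = c₂ then x i c₁ else x i r)
      else x i r
    (∀ i j, G.Adj i j → ∀ r : Fin k, x' i r + x' j r ≤ 1) ∧
    (∀ i, ∑ r, x' i r ≤ 1) ∧
    (∑ i, ∑ r, x' i r) = ∑ i, ∑ r, x i r := by
  intro C x'
  have hin : ∀ i ∈ C, ∀ r, x' i r = x i (Equiv.swap c₁ c₂ r) := by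
    intro i hi r
    simp only [x', if_pos hi, Equiv.swap_apply_def]
    split_ifs <;> rfl
  have hout : ∀ i, i ∉ C → ∀ r, x' i r = x i r := fun i hi r => if_neg hi
  have hrow : ∀ i, ∑ r, x' i r = ∑ r, x i r := by
    intro i
    by_cases hi : i ∈ C
    · simp only [hin i hi]
      exact Equiv.sum_comp (Equiv.swap c₁ c₂) (x i)
    · simp only [hout i hi]
  have hleave : ∀ i j, G.Adj i j → i ∈ C → j ∉ C → j ∈ S := by
    rintro i j hij ⟨hi, rfl⟩ hj
    by_contra hjS
    refine hj ⟨hjS, SimpleGraph.ConnectedComponent.sound (SimpleGraph.Adj.reachable ?_)⟩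
    exact hij.symm
  have hcross : ∀ i j, G.Adj i j → i ∈ C → j ∉ C → ∀ r, x' i r + x' j r ≤ 1 := by
    intro i j hij hi hj r
    have hjS := hS j (hleave i j hij hi hj)
    rw [hin i hi, hout j hj]
    by_cases hr : r = c₁ ∨ r = c₂
    · have h0 : x j r = 0 := by
        rcases hr with rfl | rfl
        exacts [hjS.1, hjS.2]
      rcases hbin i (Equiv.swap c₁ c₂ r) with h | h <;> omega
    · push Not at hr
      rw [Equiv.swap_apply_of_ne_of_ne hr.1 hr.2]
      exact hedge i j hij r
  refine ⟨fun i j hij r => ?_, fun i => (hrow i).trans_le (hvert i),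
    Finset.sum_congr rfl fun i _ => hrow i⟩
  by_cases hi : i ∈ C <;> by_cases hj : j ∈ C
  · rw [hin i hi, hin j hj]
    exact hedge i j hij _
  · exact hcross i j hij hi hj r
  · rw [add_comm]
    exact hcross j i hij.symm hj hi r
  · rw [hout i hi, hout j hj]
    exact hedge i j hij r
end
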